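/- The Block type Lie algebra without central extension is indeed a Lie algebra: on the free module with basis {L_{m,l} : m ∈ ℤ, l ∈ ℤ, l ≥ 0}, the bilinear bracket defined on basis elements by [L_{m,l}, L_{n,k}] = (mk − nl)·L_{m+n−1, l+k−1} is antisymmetric and satisfies the Jacobi identity (note that when l,k ≥ 0 and the coefficient mk − nl is nonzero, the resulting index l+k−1 is again ≥ 0, so the bracket is well defined). -/

import Mathlib

/-!
Write `L_{m,l} = x^m y^l` in `R[x, x⁻¹, y]`, the monoid algebra of `ℤ × ℕ`. The Block bracket is
then the Jacobian (Poisson) bracket `{f, g} = ∂ₓf ∂ᵧg - ∂ᵧf ∂ₓg`. For any two commuting derivations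
of a commutative ring this expression is alternating, and its Jacobi identity is a polynomial
identity in the first and second derivatives of the three arguments.
-/

open Finsupp

/-- The Block bracket on the free `ℚ`-module with basis `L_{m,l}`, `m ∈ ℤ`, `l ∈ ℕ`:
`[L_{m,l}, L_{n,k}] = (m k − n l) L_{m+n−1, l+k−1}`. (When `l = k = 0` the coefficient
vanishes, so the truncated subtraction on `ℕ` is harmless.) -/
noncomputable def blockBracket (f g : (ℤ × ℕ) →₀ ℚ) : (ℤ × ℕ) →₀ ℚ :=
  f.sum fun p a => g.sum fun q b =>
    Finsupp.single (p.1 + q.1 - 1, p.2 + q.2 - 1)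
      (a * b * ((p.1 * (q.2 : ℤ) - q.1 * (p.2 : ℤ) : ℤ) : ℚ))

section JacobianBracket

variable {R A : Type*} [CommSemiring R] [CommRing A] [Algebra R A]

/-- The Jacobian bracket `{f, g} = D f * E g - E f * D g` of two derivations `D`, `E` of a
commutative algebra, as a bilinear map. For `D = ∂ₓ` and `E = ∂ᵧ` it is the standard Poisson
bracket of the plane. -/
noncomputable def jacobianBracket (D E : Derivation R A A) : A →ₗ[R] A →ₗ[R] A :=
  (LinearMap.mul R A).compl₁₂ D E - (LinearMap.mul R A).compl₁₂ E D

variable (D E : Derivation R A A)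

theorem jacobianBracket_apply (f g : A) : jacobianBracket D E f g = D f * E g - E f * D g :=
  rfl

theorem jacobianBracket_self (f : A) : jacobianBracket D E f f = 0 := by
  rw [jacobianBracket_apply, mul_comm, sub_self]

theorem jacobianBracket_antisymm (f g : A) :
    jacobianBracket D E f g = -jacobianBracket D E g f := by
  simp only [jacobianBracket_apply]
  ring

theorem jacobianBracket_jacobi {D E : Derivation R A A} (hDE : Function.Commute D E)
    (f g h : A) :
    jacobianBracket D E f (jacobianBracket D E g h) +
      jacobianBracket D E g (jacobianBracket D E h f) +
        jacobianBracket D E h (jacobianBracket D E f g) = 0 := by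
  simp only [jacobianBracket_apply, map_sub, Derivation.leibniz, smul_eq_mul, hDE.eq]
  ring

end JacobianBracket

section ShiftDerivation

variable {R G : Type*} [CommSemiring R]

/-- The linear operator `x^g ↦ w(g) x^{s(g)}` on the monoid algebra of `G`. A partial derivative is
of this form, with `w` reading off an exponent and `s` lowering it by one. -/
noncomputable def weightedShift (w : G → R) (s : G → G) :
    AddMonoidAlgebra R G →ₗ[R] AddMonoidAlgebra R G :=
  Finsupp.linearCombination R (fun g => AddMonoidAlgebra.single (s g) (w g)) ∘ₗ
    (AddMonoidAlgebra.coeffLinearEquiv R).toLinearMap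

theorem weightedShift_single (w : G → R) (s : G → G) (g : G) (a : R) :
    weightedShift w s (.single g a) = .single (s g) (a * w g) := by
  simp [weightedShift]

theorem weightedShift_commute {v w : G → R} {s t : G → G} (hst : Function.Commute s t)
    (hvt : ∀ g, v (t g) = v g) (hws : ∀ g, w (s g) = w g) :
    Function.Commute (weightedShift v s) (weightedShift w t) := by
  intro f
  induction f using AddMonoidAlgebra.induction_linear with
  | zero => simp only [map_zero]
  | add f₁ f₂ h₁ h₂ => simp only [map_add, h₁, h₂]
  | single g a => simp only [weightedShift_single, hvt, hws, hst.eq, mul_right_comm]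

theorem weightedShift_single_mul_single [Add G] {w : G → R} {s : G → G}
    (hs : ∀ g h, w g ≠ 0 → s (g + h) = s g + h) (g h : G) (a b : R) :
    weightedShift w s (.single g a) * .single h b = .single (s (g + h)) (a * b * w g) := by
  rw [weightedShift_single, AddMonoidAlgebra.single_mul_single, mul_right_comm]
  by_cases hg : w g = 0
  · simp [hg]
  · rw [hs g h hg]

theorem weightedShift_single_mul_weightedShift_single [AddCommMagma G] {v w : G → R}
    {s t : G → G} (hs : ∀ g h, v g ≠ 0 → s (g + h) = s g + h)
    (ht : ∀ g h, w g ≠ 0 → t (g + h) = t g + h) (g h : G) (a b : R) :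
    weightedShift v s (.single g a) * weightedShift w t (.single h b) =
      .single (s (t (g + h))) (a * b * (v g * w h)) := by
  rw [weightedShift_single w, weightedShift_single_mul_single hs]
  by_cases hh : w h = 0
  · simp [hh]
  · rw [add_comm g h, ht h g hh, add_comm g]
    congr 1
    ring

variable [AddCommMonoid G]

theorem weightedShift_mul {w : G →+ R} {s : G → G}
    (hs : ∀ g h, w g ≠ 0 → s (g + h) = s g + h) (f f' : AddMonoidAlgebra R G) :
    weightedShift w s (f * f') = f • weightedShift w s f' + f' • weightedShift w s f := by
  induction f using AddMonoidAlgebra.induction_linear with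
  | zero => simp
  | add f₁ f₂ h₁ h₂ => simp only [add_mul, map_add, h₁, h₂, add_smul, smul_add]; abel
  | single g a =>
    induction f' using AddMonoidAlgebra.induction_linear with
    | zero => simp
    | add f₁ f₂ h₁ h₂ => simp only [mul_add, map_add, h₁, h₂, add_smul, smul_add]; abel
    | single h b =>
      rw [smul_eq_mul, smul_eq_mul, mul_comm (.single g a) (weightedShift _ _ _),
        mul_comm (.single h b) (weightedShift _ _ _), weightedShift_single_mul_single hs,
        weightedShift_single_mul_single hs, add_comm h g, ← AddMonoidAlgebra.single_add,
        AddMonoidAlgebra.single_mul_single, weightedShift_single, map_add]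
      congr 1
      ring

/-- The operator `x^g ↦ w(g) x^{s(g)}` as a derivation of the monoid algebra of `G`. The shift `s`
has to respect translations only where the weight `w` is nonzero, so that it may truncate: on
`ℕ`, the weight `n` and the shift `n ↦ n - 1` give the derivative. -/
noncomputable def shiftDerivation (w : G →+ R) (s : G → G)
    (hs : ∀ g h, w g ≠ 0 → s (g + h) = s g + h) :
    Derivation R (AddMonoidAlgebra R G) (AddMonoidAlgebra R G) where
  toLinearMap := weightedShift w s
  map_one_eq_zero' := by simp [AddMonoidAlgebra.one_def, weightedShift_single]
  leibniz' := weightedShift_mul hs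

theorem shiftDerivation_apply {w : G →+ R} {s : G → G}
    (hs : ∀ g h, w g ≠ 0 → s (g + h) = s g + h) (f : AddMonoidAlgebra R G) :
    shiftDerivation w s hs f = weightedShift w s f :=
  rfl

end ShiftDerivation

theorem jacobianBracket_shiftDerivation_single {R G : Type*} [CommRing R] [AddCommMonoid G]
    {v w : G →+ R} {s t : G → G}
    (hs : ∀ g h, v g ≠ 0 → s (g + h) = s g + h) (ht : ∀ g h, w g ≠ 0 → t (g + h) = t g + h)
    (hst : Function.Commute s t) (g h : G) (a b : R) :
    jacobianBracket (shiftDerivation v s hs) (shiftDerivation w t ht) (.single g a) (.single h b) =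
      .single (s (t (g + h))) (a * b * (v g * w h - w g * v h)) := by
  simp only [jacobianBracket_apply, shiftDerivation_apply]
  rw [weightedShift_single_mul_weightedShift_single hs ht,
    weightedShift_single_mul_weightedShift_single ht hs, ← hst.eq,
    ← AddMonoidAlgebra.single_sub, ← mul_sub]

section BlockBracket

variable (R : Type*) [CommRing R]

/-- The partial derivative `∂ₓ` of `R[x, x⁻¹, y]`, where `x^m y^l` is the basis element `(m, l)`. -/
noncomputable def partialX :
    Derivation R (AddMonoidAlgebra R (ℤ × ℕ)) (AddMonoidAlgebra R (ℤ × ℕ)) :=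
  shiftDerivation ((Int.castAddHom R).comp (AddMonoidHom.fst ℤ ℕ)) (fun p => (p.1 - 1, p.2))
    fun p q _ => Prod.ext (add_sub_right_comm p.1 q.1 1) rfl

/-- The partial derivative `∂ᵧ` of `R[x, x⁻¹, y]`, where `x^m y^l` is the basis element `(m, l)`. -/
noncomputable def partialY :
    Derivation R (AddMonoidAlgebra R (ℤ × ℕ)) (AddMonoidAlgebra R (ℤ × ℕ)) :=
  shiftDerivation ((Nat.castAddMonoidHom R).comp (AddMonoidHom.snd ℤ ℕ)) (fun p => (p.1, p.2 - 1))
    fun p q hp => by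
      have hp2 : p.2 ≠ 0 := fun h => hp (by simp [h])
      exact Prod.ext rfl (Nat.sub_add_comm (Nat.one_le_iff_ne_zero.mpr hp2))

theorem partialX_commute_partialY : Function.Commute (partialX R) (partialY R) :=
  weightedShift_commute (fun _ => rfl) (fun _ => rfl) (fun _ => rfl)

theorem jacobianBracket_partialX_partialY_single (p q : ℤ × ℕ) (a b : R) :
    jacobianBracket (partialX R) (partialY R) (.single p a) (.single q b) =
      .single (p.1 + q.1 - 1, p.2 + q.2 - 1)
        (a * b * ((p.1 * (q.2 : ℤ) - q.1 * (p.2 : ℤ) : ℤ) : R)) := by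
  rw [partialX, partialY, jacobianBracket_shiftDerivation_single]
  · simp [mul_comm]
  · exact fun _ => rfl

/-- The Block bracket over an arbitrary commutative ring `R`; over `ℚ` it is `blockBracket`. -/
noncomputable def blockBracketOver (f g : (ℤ × ℕ) →₀ R) : (ℤ × ℕ) →₀ R :=
  f.sum fun p a => g.sum fun q b =>
    Finsupp.single (p.1 + q.1 - 1, p.2 + q.2 - 1)
      (a * b * ((p.1 * (q.2 : ℤ) - q.1 * (p.2 : ℤ) : ℤ) : R))

theorem blockBracketOver_eq_jacobianBracket (f g : (ℤ × ℕ) →₀ R) :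
    blockBracketOver R f g =
      (jacobianBracket (partialX R) (partialY R) (.ofCoeff f) (.ofCoeff g)).coeff := by
  conv_rhs => rw [← Finsupp.sum_single f, AddMonoidAlgebra.ofCoeff_finsuppSum, map_finsuppSum,
    LinearMap.finsupp_sum_apply, AddMonoidAlgebra.coeff_finsuppSum]
  refine Finsupp.sum_congr fun p _ => ?_
  conv_rhs => rw [← Finsupp.sum_single g, AddMonoidAlgebra.ofCoeff_finsuppSum, map_finsuppSum,
    AddMonoidAlgebra.coeff_finsuppSum]
  simp only [AddMonoidAlgebra.ofCoeff_single, jacobianBracket_partialX_partialY_single,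
    AddMonoidAlgebra.coeff_single]

theorem blockBracket_isLieAlgebra_general :
    (∀ (m n : ℤ) (l k : ℕ),
      blockBracketOver R (Finsupp.single (m, l) 1) (Finsupp.single (n, k) 1) =
        ((m * (k : ℤ) - n * (l : ℤ) : ℤ) : R) • Finsupp.single (m + n - 1, l + k - 1) 1) ∧
    (∀ (a : R) (f f' g : (ℤ × ℕ) →₀ R),
      blockBracketOver R (a • f + f') g = a • blockBracketOver R f g + blockBracketOver R f' g) ∧
    (∀ (a : R) (f g g' : (ℤ × ℕ) →₀ R),
      blockBracketOver R f (a • g + g') = a • blockBracketOver R f g + blockBracketOver R f g') ∧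
    (∀ f : (ℤ × ℕ) →₀ R, blockBracketOver R f f = 0) ∧
    (∀ f g : (ℤ × ℕ) →₀ R, blockBracketOver R f g = -blockBracketOver R g f) ∧
    (∀ f g h : (ℤ × ℕ) →₀ R,
      blockBracketOver R f (blockBracketOver R g h) +
        blockBracketOver R g (blockBracketOver R h f) +
          blockBracketOver R h (blockBracketOver R f g) = 0) := by
  simp only [blockBracketOver_eq_jacobianBracket]
  refine ⟨fun m n l k => ?basis, fun a f f' g => ?left, fun a f g g' => ?right,
    fun f => ?self, fun f g => ?antisymm, fun f g h => ?jacobi⟩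
  case basis => simp [jacobianBracket_partialX_partialY_single]
  case left => simp
  case right => simp
  case self => simp [jacobianBracket_self]
  case antisymm => rw [jacobianBracket_antisymm, AddMonoidAlgebra.coeff_neg]
  case jacobi =>
    exact congrArg AddMonoidAlgebra.coeff
      (jacobianBracket_jacobi (partialX_commute_partialY R) _ _ _)

end BlockBracket

/-- The Block type Lie algebra (without central extension) is a Lie algebra: the bracket
is bilinear, takes the prescribed values on basis elements, is antisymmetric and satisfies
the Jacobi identity. -/
theorem blockBracket_isLieAlgebra :
    (∀ (m n : ℤ) (l k : ℕ),
      blockBracket (Finsupp.single (m, l) 1) (Finsupp.single (n, k) 1) =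
        ((m * (k : ℤ) - n * (l : ℤ) : ℤ) : ℚ) • Finsupp.single (m + n - 1, l + k - 1) 1) ∧
    (∀ (a : ℚ) (f f' g : (ℤ × ℕ) →₀ ℚ),
      blockBracket (a • f + f') g = a • blockBracket f g + blockBracket f' g) ∧
    (∀ (a : ℚ) (f g g' : (ℤ × ℕ) →₀ ℚ),
      blockBracket f (a • g + g') = a • blockBracket f g + blockBracket f g') ∧
    (∀ f g : (ℤ × ℕ) →₀ ℚ, blockBracket f g = - blockBracket g f) ∧
    (∀ f g h : (ℤ × ℕ) →₀ ℚ,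
      blockBracket f (blockBracket g h) + blockBracket g (blockBracket h f) +
        blockBracket h (blockBracket f g) = 0) := by
  obtain ⟨basis, left, right, -, antisymm, jacobi⟩ := blockBracket_isLieAlgebra_general ℚ
  exact ⟨basis, left, right, antisymm, jacobi⟩
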